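/- Let G be a finite group, H ⊴ G of prime index p, V a G-stable irreducible FH-module with α, λ as usual, and suppose α|Z(Δ) has order p. If the equation μ^{⊏p} = λ⁻¹ has no solution μ ∈ Δ^×, then the induced module V↑G is an irreducible FG-module. -/

import Mathlib

open LinearMap

/-- Left-twisted powers of an endomorphism `μ` with respect to conjugation by `α`:
`μ^{⊏0} = 1`, `μ^{⊏(i+1)} = μ^{⊏i} ⬝ (α^i-conjugate of μ)`. -/
def ltpE {F V : Type*} [Field F] [AddCommGroup V] [Module F V]
    (α : V ≃ₗ[F] V) (μ : Module.End F V) : ℕ → Module.End F V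
  | 0 => 1
  | i + 1 => ltpE α μ i *
      (((α.symm : V →ₗ[F] V) ^ i) ∘ₗ μ ∘ₗ ((α : V →ₗ[F] V) ^ i))

/-!
The summands `τ(a)^i V` of `W = V↑G` are isomorphic to `V` over `H`, so that `W ≅ V^p` over `H`, and
`δ ∈ Δ` extends to an endomorphism of `W` acting on the `i`-th coordinate as `α^i δ α^{-i}`. For
`δ ∈ Z(Δ)` these operators separate the coordinates, because `α` has order `p` on `Z(Δ)`. Hence a
nonzero `FG`-submodule of `W` stable under `End_{FG}(W)` contains a whole summand, hence is `W`.
It follows that `W` is its own isotypic component at any simple submodule `U`, that is, `W ≅ U^n`.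
Comparing lengths over `H` gives `p = n · length(U)`, so either `n = 1` and `W` is simple, or `U`
restricted to `H` is isomorphic to `V`. In the second case `σ` extends to a representation `ρ` of
`G` on `V`, and `μ = ρ(a)⁻¹ α` solves `μ^{⊏p} = λ⁻¹`.
-/

open Representation

open scoped MonoidAlgebra

section SimpleModules

variable {R : Type*} [Ring R]

theorem nonempty_linearEquiv_of_injective_fun {M V ι : Type*} [AddCommGroup M] [AddCommGroup V]
    [Module R M] [Module R V] [IsSimpleModule R M] [IsSimpleModule R V] {f : M →ₗ[R] ι → V}
    (hf : Function.Injective f) : Nonempty (M ≃ₗ[R] V) := by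
  have : Nontrivial M := IsSimpleModule.nontrivial R M
  obtain ⟨m, hm⟩ := exists_ne (0 : M)
  obtain ⟨i, hi⟩ := Function.ne_iff.1 ((map_ne_zero_iff f hf).2 hm)
  have hne : proj i ∘ₗ f ≠ 0 := fun h => hi congr($h m)
  exact ⟨.ofBijective _ (bijective_of_ne_zero hne)⟩

theorem exists_linearEquiv_fun_of_isFullyInvariant_imp {W : Type*} [AddCommGroup W] [Module R W]
    [Nontrivial W] [IsArtinian R W] [Module.Finite R W]
    (h : ∀ T : Submodule R W, T.IsFullyInvariant → T = ⊥ ∨ T = ⊤) :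
    ∃ (U : Submodule R W) (n : ℕ), IsSimpleModule R U ∧ Nonempty (W ≃ₗ[R] (Fin n → U)) := by
  obtain ⟨U, hU⟩ := IsAtomic.exists_atom (Submodule R W)
  have : IsSimpleModule R U := isSimpleModule_iff_isAtom.2 hU
  have htop : isotypicComponent R W U = ⊤ :=
    (h _ (.isotypicComponent R W U)).resolve_left (bot_lt_isotypicComponent U).ne'
  have : IsSemisimpleModule R W := by
    rw [← Submodule.topEquiv.isSemisimpleModule_iff, ← htop]
    infer_instance
  obtain ⟨n, ⟨e⟩⟩ := (IsIsotypicOfType.of_isotypicComponent_eq_top htop).linearEquiv_fun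
  exact ⟨U, n, ‹_›, ⟨e⟩⟩

theorem isSimpleModule_or_exists_linearEquiv {S V W : Type*} [Ring S] [SMul R S]
    [AddCommGroup V] [AddCommGroup W] [Module R V] [Module R W] [Module S W] [IsScalarTower R S W]
    [IsSimpleModule R V] {p : ℕ} (hp : p.Prime) (e : W ≃ₗ[R] (Fin p → V))
    (h : ∀ T : Submodule S W, T.IsFullyInvariant → T = ⊥ ∨ T = ⊤) :
    IsSimpleModule S W ∨ ∃ U : Submodule S W, Nonempty (U ≃ₗ[R] V) := by
  have : Nontrivial W :=
    have := IsSimpleModule.nontrivial R V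
    have := Fin.pos_iff_nonempty.1 hp.pos
    e.toEquiv.nontrivial
  have : IsArtinian R W := isArtinian_of_linearEquiv e.symm
  have : IsArtinian S W := isArtinian_of_tower R inferInstance
  have : IsNoetherian R W := isNoetherian_of_linearEquiv e.symm
  have : Module.Finite S W := .of_restrictScalars_finite R S W
  obtain ⟨U, n, hU, ⟨e'⟩⟩ := exists_linearEquiv_fun_of_isFullyInvariant_imp h
  have hlen : (p : ℕ∞) = n * Module.length R U := by
    simpa using e.length_eq.symm.trans (e'.restrictScalars R).length_eq
  have : IsArtinian R U := inferInstanceAs (IsArtinian R (U.restrictScalars R))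
  have : IsNoetherian R U := inferInstanceAs (IsNoetherian R (U.restrictScalars R))
  lift Module.length R U to ℕ using Module.length_ne_top with k hk
  obtain rfl | rfl : n = 1 ∨ k = 1 := by
    rw [← Nat.cast_mul, Nat.cast_inj] at hlen
    exact (Nat.prime_mul_iff.1 (hlen ▸ hp)).symm.imp And.right And.right
  · exact .inl (.congr (e'.trans (.funUnique _ S U)))
  · have : IsSimpleModule R U := Module.length_eq_one_iff.1 hk.symm
    exact .inr ⟨U, nonempty_linearEquiv_of_injective_fun
      (f := e.toLinearMap ∘ₗ (U.subtype.restrictScalars R))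
      (e.injective.comp U.subtype_injective)⟩

open Module in
theorem comp_mem_of_mem_center {V ι : Type*} [AddCommGroup V] [Module R V] [IsSemisimpleModule R V]
    [Finite ι] {δ : End R V} (hδ : δ ∈ Set.center (End R V)) (T : Submodule R (ι → V))
    {x : ι → V} (hx : x ∈ T) : δ ∘ x ∈ T := by
  classical
  have := Fintype.ofFinite ι
  -- Jacobson density: the central `δ` acts on the finitely many `x i` as a scalar `r`.
  let f : End (End R V) V := { δ with map_smul' := fun φ v => congr($(hδ.comm φ) v) }
  obtain ⟨r, hr⟩ := jacobson_density f (Finset.univ.image x)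
  have : δ ∘ x = r • x := funext fun i => hr (x i) (by simp)
  exact this ▸ T.smul_mem r hx

open Module in
theorem exists_forall_single_mem {V ι Z : Type*} [AddCommGroup V] [Module R V]
    [IsSimpleModule R V] [Finite ι] [DecidableEq ι] (c : Z → ι → End R V)
    (hc : ∀ z i, c z i ∈ Set.center (End R V)) (hsep : ∀ i j, i ≠ j → ∃ z, c z i ≠ c z j)
    {T : Submodule R (ι → V)} (hT : ∀ z, ∀ x ∈ T, (fun i => c z i (x i)) ∈ T) (hne : T ≠ ⊥) :
    ∃ j, ∀ v, Pi.single j v ∈ T := by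
  have := Fintype.ofFinite ι
  obtain ⟨y, hyT, hy0⟩ := T.exists_mem_ne_zero_of_ne_bot hne
  obtain ⟨x, ⟨hxT, hx0⟩, hmin⟩ := exists_minimalFor_of_wellFoundedLT
    (fun x : ι → V => x ∈ T ∧ x ≠ 0) Function.support ⟨y, hyT, hy0⟩
  obtain ⟨j, hj⟩ := Function.ne_iff.1 hx0
  have hx : x = Pi.single j (x j) := by
    by_contra hxj
    obtain ⟨i, hi⟩ := Function.ne_iff.1 hxj
    have hij : i ≠ j := by rintro rfl; simp at hi
    rw [Pi.single_eq_of_ne hij] at hi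
    obtain ⟨z, hz⟩ := hsep i j hij
    let y : ι → V := (fun k => c z k (x k)) - c z j ∘ x
    have hyT : y ∈ T := T.sub_mem (hT z x hxT) (comp_mem_of_mem_center (hc z j) T hxT)
    have hyi : y i ≠ 0 := by
      have : Function.Injective (c z i - c z j) := injective_of_ne_zero (sub_ne_zero.2 hz)
      exact (map_ne_zero_iff _ this).2 hi
    have hyx : Function.support y ⊆ Function.support x := fun k => mt fun hk => by simp [y, hk]
    have := hmin ⟨hyT, fun h => hyi congr($h i)⟩ hyx (show x j ≠ 0 from hj)
    simp [y] at this
  refine ⟨j, fun v => ?_⟩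
  obtain ⟨r, hr⟩ := IsSimpleModule.toSpanSingleton_surjective R hj v
  have : Pi.single j v = r • x := by
    rw [← hr, toSpanSingleton_apply, Pi.single_smul, ← hx]
  exact this ▸ T.smul_mem r hxT

open Module in
theorem eq_bot_or_eq_top_of_isFullyInvariant {S V W ι Z : Type*} [Ring S] [SMul R S]
    [AddCommGroup V] [AddCommGroup W] [Module R V] [Module R W] [Module S W] [IsScalarTower R S W]
    [IsSimpleModule R V] [Finite ι] [DecidableEq ι] (e : W ≃ₗ[R] (ι → V))
    {c : Z → ι → End R V} (hc : ∀ z i, c z i ∈ Set.center (End R V))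
    (hsep : ∀ i j, i ≠ j → ∃ z, c z i ≠ c z j)
    (hψ : ∀ z, ∃ ψ : End S W, ∀ i v, e (ψ (e.symm (Pi.single i v))) = Pi.single i (c z i v))
    (hgen : ∀ (T : Submodule S W) j, (∀ v, e.symm (Pi.single j v) ∈ T) → T = ⊤)
    {T : Submodule S W} (hT : T.IsFullyInvariant) : T = ⊥ ∨ T = ⊤ := by
  refine or_iff_not_imp_left.2 fun hne => ?_
  have hinv : ∀ z, ∀ x ∈ (T.restrictScalars R).map e.toLinearMap,
      (fun i => c z i (x i)) ∈ (T.restrictScalars R).map e.toLinearMap := by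
    rintro z _ ⟨w, hw, rfl⟩
    obtain ⟨ψ, hψ⟩ := hψ z
    refine ⟨ψ w, hT ψ hw, ?_⟩
    have : e ∘ₗ ψ.restrictScalars R ∘ₗ e.symm = .pi fun i => c z i ∘ₗ proj i :=
      pi_ext fun i v => (hψ i v).trans <| funext fun j =>
        (Pi.apply_single (fun j => c z j) (fun _ => map_zero _) i v j).symm
    simpa using! congr($this (e w))
  obtain ⟨j, hj⟩ := exists_forall_single_mem c hc hsep hinv (by simpa using hne)
  refine hgen T j fun v => ?_
  obtain ⟨w, hw, hwe⟩ := hj v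
  exact e.symm_apply_eq.2 hwe.symm ▸ hw

end SimpleModules

theorem exists_linearEquiv_pi_of_isInternal_range {R ι W : Type*} [Ring R] [Finite ι]
    [DecidableEq ι] {M : ι → Type*} [∀ i, AddCommGroup (M i)] [∀ i, Module R (M i)]
    [AddCommGroup W] [Module R W] {f : ∀ i, M i →ₗ[R] W} (hf : ∀ i, Function.Injective (f i))
    (h : DirectSum.IsInternal fun i => range (f i)) :
    ∃ e : W ≃ₗ[R] (∀ i, M i), ∀ i v, e (f i v) = Pi.single i v := by
  have := Fintype.ofFinite ι
  let u (i : ι) : M i ≃ₗ[R] range (f i) := .ofInjective (f i) (hf i)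
  let e : (∀ i, M i) ≃ₗ[R] W := .piCongrRight u ≪≫ₗ
    (DirectSum.linearEquivFunOnFintype R ι fun i => range (f i)).symm ≪≫ₗ
    .ofBijective (DirectSum.coeLinearMap _) h
  refine ⟨e.symm, fun i v => e.symm_apply_eq.2 ?_⟩
  have hu : LinearEquiv.piCongrRight u (Pi.single i v) = Pi.single i (u i v) :=
    funext fun j => Pi.apply_single (fun i => u i) (fun i => map_zero _) i v j
  simp only [e, LinearEquiv.trans_apply, hu, DirectSum.linearEquivFunOnFintype_symm_single]
  exact (DirectSum.coeLinearMap_of (fun i => range (f i)) i (u i v)).symm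

theorem exists_linearEquiv_pi_asModule {F H V W ι : Type*} [CommRing F] [Monoid H] [AddCommGroup V]
    [Module F V] [AddCommGroup W] [Module F W] [Finite ι] [DecidableEq ι]
    {σ : Representation F H V} {π : Representation F H W}
    {f : ι → IntertwiningMap σ π} (hf : ∀ i, Function.Injective (f i))
    (h : DirectSum.IsInternal fun i => range (f i).toLinearMap) :
    ∃ e : π.asModule ≃ₗ[F[H]] (ι → σ.asModule), ∀ i v, e (f i v) = Pi.single i v := by
  have := Fintype.ofFinite ι
  obtain ⟨e, he⟩ := exists_linearEquiv_pi_of_isInternal_range hf h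
  let φ (i : ι) := IntertwiningMap.equivLinearMapAsModule σ π (f i)
  have hφ : ⇑(lsum F[H] (fun _ => σ.asModule) ℕ φ) = e.symm := by
    funext x
    refine e.eq_symm_apply.2 ?_
    have : lsum F[H] (fun _ => σ.asModule) ℕ φ x = ∑ i, f i (x i) := sum_apply ..
    refine this ▸ (map_sum e _ _).trans ?_
    exact (Finset.sum_congr rfl fun i _ => he i (x i)).trans (Finset.univ_sum_single x)
  refine ⟨(LinearEquiv.ofBijective _ (hφ ▸ e.symm.bijective)).symm, fun i v => ?_⟩
  refine (LinearEquiv.symm_apply_eq _).2 ?_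
  exact (e.eq_symm_apply.2 (he i v)).trans congr($hφ (Pi.single i v)).symm

theorem asAlgebraHom_comp {F G H W : Type*} [CommSemiring F] [Monoid G] [Monoid H]
    [AddCommMonoid W] [Module F W] (τ : Representation F G W) (f : H →* G) (r : F[H]) :
    asAlgebraHom (τ.comp f) r = asAlgebraHom τ (MonoidAlgebra.mapDomainRingHom F f r) := by
  have : asAlgebraHom (τ.comp f) = (asAlgebraHom τ).comp (MonoidAlgebra.mapDomainAlgHom F F f) := by
    ext; simp
  exact congr($this r)

theorem nonempty_equiv_of_addEquiv {F H V W : Type*} [CommSemiring F] [Monoid H] [AddCommMonoid V]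
    [Module F V] [AddCommMonoid W] [Module F W] {ρ : Representation F H W}
    {σ : Representation F H V} (φ : W ≃+ V)
    (hφ : ∀ (c : F) h w, φ (c • ρ h w) = c • σ h (φ w)) :
    Nonempty (Representation.Equiv ρ σ) :=
  ⟨.mk { φ with map_smul' := fun c w => by simpa using! hφ c 1 w } fun h =>
    LinearMap.ext fun w => by simpa using! hφ 1 h w⟩

theorem exists_extension_of_equiv {F G H V W : Type*} [CommSemiring F] [Monoid G] [Monoid H]
    [AddCommMonoid V] [Module F V] [AddCommMonoid W] [Module F W] {σ : Representation F H V}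
    {τ : Representation F G W} {f : H →* G} (φ : Representation.Equiv (τ.comp f) σ) :
    ∃ ρ : Representation F G V, ∀ h, ρ (f h) = σ h :=
  ⟨(φ.toLinearEquiv.conjAlgEquiv F : _ →* _).comp τ, fun h => φ.conj_apply_self h⟩

theorem isIrreducible_or_exists_equiv {F G H V W Z : Type*} [Field F] [Monoid G] [Monoid H]
    [AddCommGroup V] [Module F V] [AddCommGroup W] [Module F W] {σ : Representation F H V}
    {τ : Representation F G W} {f : H →* G} [σ.IsIrreducible] {p : ℕ} (hp : p.Prime)
    {g : Fin p → IntertwiningMap σ (τ.comp f)} (hg : ∀ i, Function.Injective (g i))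
    (hint : DirectSum.IsInternal fun i => range (g i).toLinearMap)
    (hgen : ∀ (U : Subrepresentation τ) j, (∀ v, g j v ∈ U) → U = ⊤)
    {c : Z → Fin p → IntertwiningMap σ σ} (hc : ∀ z i, c z i ∈ Set.center (IntertwiningMap σ σ))
    (hsep : ∀ i j, i ≠ j → ∃ z, c z i ≠ c z j)
    (hψ : ∀ z, ∃ ψ : IntertwiningMap τ τ, ∀ i v, ψ (g i v) = g i (c z i v)) :
    τ.IsIrreducible ∨
      ∃ U : Subrepresentation τ, Nonempty (Representation.Equiv (U.toRepresentation.comp f) σ) := by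
  let _ : SMul F[H] F[G] := ⟨fun r s => MonoidAlgebra.mapDomainRingHom F f r * s⟩
  let _ : Module F[H] τ.asModule := instModuleMonoidAlgebraAsModule (τ.comp f)
  have : IsScalarTower F[H] F[G] τ.asModule := ⟨fun r s w => (mul_smul _ s w).trans
    congr($(asAlgebraHom_comp τ f r) (s • w)).symm⟩
  have : IsSimpleModule F[H] σ.asModule := σ.irreducible_iff_isSimpleModule_asModule.1 ‹_›
  obtain ⟨e, he⟩ : ∃ e : τ.asModule ≃ₗ[F[H]] (Fin p → σ.asModule),
    ∀ i v, e (g i v) = Pi.single i v := exists_linearEquiv_pi_asModule hg hint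
  have he' (i) (v) : e.symm (Pi.single i v) = g i v := e.symm_apply_eq.2 (he i v).symm
  let E := IntertwiningMap.equivAlgEnd σ
  have hψE (z : Z) : ∃ ψ : Module.End F[G] τ.asModule, ∀ i v,
      e (ψ (e.symm (Pi.single i v))) = Pi.single i (E (c z i) v) := by
    obtain ⟨ψ, hψ⟩ := hψ z
    refine ⟨IntertwiningMap.equivAlgEnd τ ψ, fun i v => ?_⟩
    exact (congrArg e ((congrArg ψ (he' i v)).trans (hψ i v))).trans (he i _)
  obtain hs | ⟨U, ⟨φ⟩⟩ := isSimpleModule_or_exists_linearEquiv (S := F[G]) hp e fun T hT =>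
    eq_bot_or_eq_top_of_isFullyInvariant e (c := fun (z : Z) i => E (c z i))
      (fun z i => MulEquivClass.apply_mem_center E (hc z i))
      (fun i j hij => (hsep i j hij).imp fun z hz => E.injective.ne hz)
      hψE
      (fun T j hj => Subrepresentation.subrepresentationSubmoduleOrderIso.symm.injective <|
        (hgen (.ofSubmodule' T) j fun v => he' j v ▸ hj v).trans (map_top _).symm) hT
  · exact .inl (τ.irreducible_iff_isSimpleModule_asModule.2 hs)
  · refine .inr ⟨.ofSubmodule' U, nonempty_equiv_of_addEquiv φ.toAddEquiv fun c h u => ?_⟩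
    refine .trans (congrArg φ (Subtype.ext ?_))
      ((φ.map_smul (MonoidAlgebra.single h c) u).trans (single_smul σ c h (φ u)))
    exact (single_smul (τ.comp f) c h u.1).symm

theorem isIrreducible_iff {F G W : Type*} [Field F] [Monoid G] [AddCommGroup W] [Module F W]
    {τ : Representation F G W} : τ.IsIrreducible ↔ Nontrivial W ∧
      ∀ U : Submodule F W, (∀ g, ∀ w ∈ U, τ g w ∈ U) → U = ⊥ ∨ U = ⊤ := by
  have hbot (U : Subrepresentation τ) : U = ⊥ ↔ U.toSubmodule = ⊥ :=
    Subrepresentation.toSubmodule_injective.eq_iff.symm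
  have htop (U : Subrepresentation τ) : U = ⊤ ↔ U.toSubmodule = ⊤ :=
    Subrepresentation.toSubmodule_injective.eq_iff.symm
  refine ⟨fun h => ⟨?_, fun U hU => ?_⟩, fun ⟨_, h⟩ => ?_⟩
  · have hne : (⊥ : Subrepresentation τ) ≠ ⊤ := bot_ne_top
    exact (Submodule.nontrivial_iff F).1 ⟨⊥, ⊤, fun heq => hne ((htop ⊥).2 heq)⟩
  · exact (eq_bot_or_eq_top (⟨U, hU⟩ : Subrepresentation τ)).imp (hbot _).1 (htop _).1
  · have : Nontrivial (Subrepresentation τ) :=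
      ⟨⊥, ⊤, fun heq => (bot_ne_top : (⊥ : Submodule F W) ≠ ⊤) ((htop ⊥).1 heq)⟩
    refine ⟨fun U => ?_⟩
    exact (h U.toSubmodule U.apply_mem_toSubmodule).imp (hbot U).2 (htop U).2

theorem exists_intertwiningMap_extending {F G V W κ : Type*} [CommRing F] [Group G] [AddCommGroup V]
    [Module F V] [AddCommGroup W] [Module F W] [Finite κ] [DecidableEq κ] {H : Subgroup G}
    {σ : Representation F H V} {τ : Representation F G W} {t : κ → G}
    (ht : ∀ g, ∃ (i : κ) (h : H), t i * h = g) {f : IntertwiningMap σ (τ.comp H.subtype)}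
    (hf : Function.Injective f)
    (hint : DirectSum.IsInternal fun i => Submodule.map (τ (t i)) (range f.toLinearMap))
    (δ : IntertwiningMap σ σ) : ∃ ψ : IntertwiningMap τ τ, ∀ v, ψ (f v) = f (δ v) := by
  have hinj (i) : Function.Injective (τ (t i) ∘ₗ f.toLinearMap) :=
    (τ.apply_bijective (t i)).injective.comp hf
  simp only [← range_comp] at hint
  obtain ⟨e, he⟩ := exists_linearEquiv_pi_of_isInternal_range hinj hint
  let ψ : Module.End F W := e.symm.conj (.pi fun i => δ.toLinearMap ∘ₗ proj i)
  have hψ (g v) : ψ (τ g (f v)) = τ g (f (δ v)) := by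
    obtain ⟨i, h, rfl⟩ := ht g
    have hfh (v) : τ (t i * h) (f v) = e.symm (Pi.single i (σ h v)) := by
      rw [map_mul]
      exact (congrArg (τ (t i)) (f.isIntertwining _ _ h v).symm).trans
        (e.eq_symm_apply.2 (he i (σ h v)))
    have : LinearMap.pi (fun i => δ.toLinearMap ∘ₗ proj i) (Pi.single i (σ h v)) =
        Pi.single i (σ h (δ v)) :=
      (funext fun j => Pi.apply_single (fun _ => δ) (fun _ => map_zero _) i _ j).trans
        congr(Pi.single i $(δ.isIntertwining _ _ h v))
    rw [hfh, hfh, ← this]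
    simp [ψ]
  have hspan {φ φ' : W →ₗ[F] W} (h : ∀ g v, φ (τ g (f v)) = φ' (τ g (f v))) : φ = φ' := by
    refine eqLocus_eq_top.1 (top_le_iff.1 (hint.submodule_iSup_eq_top.symm.trans_le ?_))
    exact iSup_le fun i => by rintro _ ⟨v, rfl⟩; exact h (t i) v
  refine ⟨⟨ψ, fun g => hspan fun g' v => ?_⟩, fun v => by simpa using hψ 1 v⟩
  have := hψ (g * g') v
  rw [map_mul] at this
  exact this.trans congr(τ g $(hψ g' v)).symm

theorem eq_top_of_map_le {F G W κ : Type*} [CommRing F] [Group G] [AddCommGroup W] [Module F W]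
    {τ : Representation F G W} {t : κ → G} {N : Submodule F W}
    (hN : ⨆ i, N.map (τ (t i)) = ⊤) {U : Subrepresentation τ} {j : κ}
    (hU : N.map (τ (t j)) ≤ U.toSubmodule) : U = ⊤ := by
  refine Subrepresentation.toSubmodule_injective <| top_le_iff.1 <|
    hN.symm.trans_le <| iSup_le fun i => ?_
  rintro _ ⟨w, hw, rfl⟩
  have : τ (t i) w = τ (t i * (t j)⁻¹) (τ (t j) w) := by
    simp [← Module.End.mul_apply, ← map_mul]
  exact this ▸ U.apply_mem_toSubmodule _ (hU ⟨w, hw, rfl⟩)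

theorem symm_pow_mul_pow {R M : Type*} [Semiring R] [AddCommMonoid M] [Module R M] (e : M ≃ₗ[R] M)
    (n : ℕ) : (e.symm.toLinearMap ^ n : Module.End R M) * e.toLinearMap ^ n = 1 := by
  ext v
  simpa [Module.End.pow_apply] using Function.LeftInverse.iterate e.symm_apply_apply n v

theorem exists_pow_apply_ne_pow_apply {M : Type*} [Mul M] {c : MulAut M} {Z : Set M} {p : ℕ}
    (h : ∀ k, 0 < k → k < p → ∃ z ∈ Z, (c ^ k) z ≠ z) {i j : Fin p} (hij : i ≠ j) :
    ∃ z ∈ Z, (c ^ (i : ℕ)) z ≠ (c ^ (j : ℕ)) z := by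
  wlog hlt : i < j generalizing i j
  · obtain ⟨z, hz, hne⟩ := this hij.symm (hij.lt_or_gt.resolve_left hlt)
    exact ⟨z, hz, hne.symm⟩
  obtain ⟨k, hk⟩ := Nat.exists_eq_add_of_le hlt.le
  obtain ⟨z, hz, hne⟩ := h k (by lia) (by lia)
  rw [hk, pow_add]
  exact ⟨z, hz, fun heq => hne ((c ^ (i : ℕ)).injective heq.symm)⟩

theorem exists_pow_mul_eq_of_index_prime {G : Type*} [Group G] {H : Subgroup G} [H.Normal] {a : G}
    {p : ℕ} (hp : p.Prime) (hidx : H.index = p) (ha : a ∉ H) (g : G) :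
    ∃ (i : Fin p) (h : H), a ^ (i : ℕ) * h = g := by
  have := Fact.mk hp
  have ha1 : (a : G ⧸ H) ≠ 1 := (QuotientGroup.eq_one_iff a).not.2 ha
  obtain ⟨n, hn⟩ := mem_powers_of_prime_card (p := p) hidx ha1 (g' := (g : G ⧸ H))
  have hap : (a : G ⧸ H) ^ p = 1 := by rw [← hidx]; exact pow_card_eq_one'
  have hmod : ((a ^ (n % p) : G) : G ⧸ H) = g := (pow_eq_pow_mod n hap).symm.trans hn
  exact ⟨⟨n % p, Nat.mod_lt _ hp.pos⟩, ⟨_, QuotientGroup.eq.1 hmod⟩, mul_inv_cancel_left _ _⟩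

section Conjugation

variable {F G V W : Type*} [CommRing F] [Group G] [AddCommGroup V] [Module F V] [AddCommGroup W]
  [Module F W] {H : Subgroup G} [H.Normal] {σ : Representation F H V} {τ : Representation F G W}
  {a : G} {α : V ≃ₗ[F] V}

theorem symm_apply_conjNormal
    (hα : ∀ h, σ (MulAut.conjNormal a h) ∘ₗ α.toLinearMap = α.toLinearMap ∘ₗ σ h) (h : H) (v : V) :
    α.symm (σ (MulAut.conjNormal a h) v) = σ h (α.symm v) :=
  α.symm_apply_eq.2 (by simpa using congr($(hα h) (α.symm v)))

variable (hα : ∀ h, σ (MulAut.conjNormal a h) ∘ₗ α.toLinearMap = α.toLinearMap ∘ₗ σ h)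

/-- The automorphism `δ ↦ α δ α⁻¹` of `Δ = End_{FH}(V)` induced by `α`. The left-twisted powers
`ltpE` conjugate by `α⁻¹` instead, that is, by the inverse of this automorphism. -/
def endConj : MulAut (IntertwiningMap σ σ) where
  toFun δ := ⟨α.conj δ.toLinearMap, fun h => by
    obtain ⟨h, rfl⟩ := (MulAut.conjNormal a).surjective h
    ext v
    simpa [symm_apply_conjNormal hα, δ.isIntertwining] using! congr($(hα h) (δ (α.symm v))).symm⟩
  invFun δ := ⟨α.symm.conj δ.toLinearMap, fun h => by
    ext v
    have : α (σ h v) = σ (MulAut.conjNormal a h) (α v) := congr($(hα h) v).symm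
    simp [this, symm_apply_conjNormal hα, δ.isIntertwining]⟩
  left_inv δ := by ext; simp
  right_inv δ := by ext; simp
  map_mul' δ ε := by ext; simp

theorem toLinearMap_endConj_pow (n : ℕ) (δ : IntertwiningMap σ σ) :
    ((endConj hα ^ n) δ).toLinearMap =
      (α.toLinearMap ^ n : Module.End F V) * δ.toLinearMap * α.symm.toLinearMap ^ n := by
  induction n with
  | zero => rfl
  | succ n ih =>
    rw [pow_succ', pow_succ', pow_succ]
    simp only [mul_assoc] at ih ⊢
    exact congr(α.toLinearMap * ($ih * α.symm.toLinearMap))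

theorem exists_mem_center_endConj_pow_ne {k : ℕ} (h : ∃ z : Module.End F V,
        (∀ h, Commute z (σ h)) ∧
        (∀ δ : Module.End F V, (∀ h, Commute δ (σ h)) → Commute z δ) ∧
        (α.symm.toLinearMap ^ k) ∘ₗ z ∘ₗ (α.toLinearMap ^ k) ≠ z) :
    ∃ z ∈ Set.center (IntertwiningMap σ σ), (endConj hα ^ k) z ≠ z := by
  obtain ⟨z, hzσ, hzΔ, hne⟩ := h
  let ζ : IntertwiningMap σ σ := ⟨z, hzσ⟩
  refine ⟨ζ, Semigroup.mem_center_iff.2 fun δ => ?_, fun heq => hne ?_⟩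
  · ext v
    exact congr($(hzΔ δ.toLinearMap δ.isIntertwining') v).symm
  · have hz : (α.toLinearMap ^ k : Module.End F V) * z * α.symm.toLinearMap ^ k = z :=
      (toLinearMap_endConj_pow hα k ζ).symm.trans congr(($heq).toLinearMap)
    rw [← Module.End.mul_eq_comp, ← Module.End.mul_eq_comp]
    nth_rw 1 [← hz]
    simp only [mul_assoc, symm_pow_mul_pow, mul_one]
    rw [← mul_assoc, symm_pow_mul_pow, one_mul]

/-- The homomorphism `v ↦ τ(a) f(α⁻¹ v)` of `FH`-modules. Its iterates embed `V` as the summands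
`τ(a)^i f(V)` of `V↑G`. -/
def conjHom (f : IntertwiningMap σ (τ.comp H.subtype)) : IntertwiningMap σ (τ.comp H.subtype) where
  toLinearMap := τ a ∘ₗ f.toLinearMap ∘ₗ α.symm.toLinearMap
  isIntertwining' h := by
    obtain ⟨h, rfl⟩ := (MulAut.conjNormal a).surjective h
    ext v
    have := f.isIntertwining _ _ h (α.symm v)
    simp_all [symm_apply_conjNormal hα, ← Module.End.mul_apply, ← map_mul]

variable {f : IntertwiningMap σ (τ.comp H.subtype)}

theorem range_iterate_conjHom (n : ℕ) : range ((conjHom hα)^[n] f).toLinearMap =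
    Submodule.map (τ (a ^ n)) (range f.toLinearMap) := by
  induction n with
  | zero => simp [Module.End.one_eq_id]
  | succ n ih =>
    rw [Function.iterate_succ_apply', pow_succ', map_mul, Module.End.mul_eq_comp,
      Submodule.map_comp, ← ih]
    simp [conjHom, range_comp]

theorem injective_iterate_conjHom (hf : Function.Injective f) (n : ℕ) :
    Function.Injective ((conjHom hα)^[n] f) := by
  induction n with
  | zero => exact hf
  | succ n ih =>
    rw [Function.iterate_succ_apply']
    exact (τ.apply_bijective a).injective.comp (ih.comp α.symm.injective)

theorem apply_iterate_conjHom {ψ : IntertwiningMap τ τ} {δ : IntertwiningMap σ σ}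
    (h : ∀ v, ψ (f v) = f (δ v)) (n : ℕ) (v : V) :
    ψ ((conjHom hα)^[n] f v) = (conjHom hα)^[n] f ((endConj hα ^ n) δ v) := by
  induction n generalizing v with
  | zero => exact h v
  | succ n ih =>
    rw [Function.iterate_succ_apply', pow_succ']
    refine (ψ.isIntertwining _ _ a _).trans (congrArg (τ a) ?_)
    simpa [endConj] using ih (α.symm v)

end Conjugation

theorem ltpE_eq_pow_mul_pow {F V : Type*} [Field F] [AddCommGroup V] [Module F V] (α : V ≃ₗ[F] V)
    (μ : Module.End F V) (n : ℕ) :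
    ltpE α μ n = (μ * α.symm.toLinearMap) ^ n * α.toLinearMap ^ n := by
  induction n with
  | zero => simp [ltpE]
  | succ n ih =>
    have hα : (α.toLinearMap ^ n : Module.End F V) * α.symm.toLinearMap ^ n = 1 :=
      symm_pow_mul_pow α.symm n
    have hα' : (α.symm.toLinearMap : Module.End F V) * α.toLinearMap = 1 := by
      simpa using symm_pow_mul_pow α 1
    calc ltpE α μ (n + 1)
      _ = ltpE α μ n * (α.symm.toLinearMap ^ n * (μ * α.toLinearMap ^ n)) := rfl
      _ = (μ * α.symm.toLinearMap) ^ n * (α.toLinearMap ^ n * α.symm.toLinearMap ^ n) *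
          (μ * α.toLinearMap ^ n) := by rw [ih]; simp only [mul_assoc]
      _ = (μ * α.symm.toLinearMap) ^ n *
          (μ * (α.symm.toLinearMap * α.toLinearMap) * α.toLinearMap ^ n) := by
        rw [hα, hα', mul_one, mul_one]
      _ = _ := by rw [pow_succ, pow_succ']; simp only [mul_assoc]

section Stable

variable {F G V W : Type*} [Field F] [Group G] [AddCommGroup V] [Module F V] [AddCommGroup W]
  [Module F W] {H : Subgroup G} [H.Normal] {σ : Representation F H V} {τ : Representation F G W}
  {a : G} {α : V ≃ₗ[F] V}

theorem exists_isUnit_ltpE_mul_eq_one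
    (hα : ∀ h, σ (MulAut.conjNormal a h) ∘ₗ α.toLinearMap = α.toLinearMap ∘ₗ σ h)
    {ρ : Representation F G V} (hρ : ∀ h : H, ρ h = σ h) {n : ℕ} (han : a ^ n ∈ H) :
    ∃ μ : Module.End F V, IsUnit μ ∧ (∀ h, Commute μ (σ h)) ∧
      ltpE α μ n * ((α.symm.toLinearMap ^ n) ∘ₗ σ ⟨a ^ n, han⟩) = 1 := by
  have haa (x : G) : ρ x⁻¹ * ρ x = 1 := by rw [← map_mul, inv_mul_cancel, map_one]
  refine ⟨ρ a⁻¹ * α.toLinearMap, ?_, fun h => ?_, ?_⟩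
  · exact (Group.isUnit a⁻¹).map ρ |>.mul (Module.End.isUnit_iff _ |>.2 α.bijective)
  · have hσ : ρ a⁻¹ * σ (MulAut.conjNormal a h) = σ h * ρ a⁻¹ := by
      simp only [← hρ, ← map_mul, MulAut.conjNormal_apply]
      group
    calc ρ a⁻¹ * α.toLinearMap * σ h
      _ = ρ a⁻¹ * (σ (MulAut.conjNormal a h) * α.toLinearMap) := congr(ρ a⁻¹ * $((hα h).symm))
      _ = σ h * (ρ a⁻¹ * α.toLinearMap) := by rw [← mul_assoc, hσ, mul_assoc]
  · have hαα (k : ℕ) : (α.toLinearMap ^ k : Module.End F V) * α.symm.toLinearMap ^ k = 1 :=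
      symm_pow_mul_pow α.symm k
    calc ltpE α (ρ a⁻¹ * α.toLinearMap) n * ((α.symm.toLinearMap ^ n) ∘ₗ σ ⟨a ^ n, han⟩)
      _ = (ρ a⁻¹ * (α.toLinearMap ^ 1 * α.symm.toLinearMap ^ 1)) ^ n *
          (α.toLinearMap ^ n * α.symm.toLinearMap ^ n) * ρ (a ^ n) := by
        rw [ltpE_eq_pow_mul_pow, ← hρ, ← Module.End.mul_eq_comp]
        simp only [pow_one, mul_assoc]
      _ = ρ (a ^ n)⁻¹ * ρ (a ^ n) := by
        rw [hαα, hαα, mul_one, mul_one, ← map_pow, inv_pow]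
      _ = 1 := haa _

theorem stmt12_general [σ.IsIrreducible] {p : ℕ} (hp : p.Prime) (hidx : H.index = p) (ha : a ∉ H)
    (hap : a ^ p ∈ H)
    (hα : ∀ h, σ (MulAut.conjNormal a h) ∘ₗ α.toLinearMap = α.toLinearMap ∘ₗ σ h)
    (hmin : ∀ k, 0 < k → k < p → ∃ z ∈ Set.center (IntertwiningMap σ σ), (endConj hα ^ k) z ≠ z)
    {f : IntertwiningMap σ (τ.comp H.subtype)} (hf : Function.Injective f)
    (hint : DirectSum.IsInternal fun i : Fin p =>
      Submodule.map (τ (a ^ (i : ℕ))) (range f.toLinearMap))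
    (hno : ¬ ∃ μ : Module.End F V, IsUnit μ ∧ (∀ h, Commute μ (σ h)) ∧
      ltpE α μ p * ((α.symm.toLinearMap ^ p) ∘ₗ σ ⟨a ^ p, hap⟩) = 1) :
    τ.IsIrreducible := by
  have hreps := exists_pow_mul_eq_of_index_prime hp hidx ha
  have hint' : DirectSum.IsInternal fun i : Fin p => range ((conjHom hα)^[i] f).toLinearMap := by
    simpa only [range_iterate_conjHom] using hint
  refine (isIrreducible_or_exists_equiv (f := H.subtype)
    (c := fun (z : Set.center (IntertwiningMap σ σ)) i => (endConj hα ^ (i : ℕ)) z) hp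
    (fun i => injective_iterate_conjHom hα hf i) hint' (fun U j hj => ?_)
    (fun z i => MulEquivClass.apply_mem_center _ z.2) (fun i j hij => ?_)
    (fun z => ?_)).resolve_right ?_
  · refine eq_top_of_map_le hint.submodule_iSup_eq_top (j := j) ?_
    rw [← range_iterate_conjHom hα]
    rintro _ ⟨v, rfl⟩
    exact hj v
  · obtain ⟨z, hz, hne⟩ := exists_pow_apply_ne_pow_apply hmin hij
    exact ⟨⟨z, hz⟩, hne⟩
  · obtain ⟨ψ, hψ⟩ := exists_intertwiningMap_extending hreps hf hint z
    exact ⟨ψ, fun i v => apply_iterate_conjHom hα hψ i v⟩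
  · rintro ⟨U, ⟨φ⟩⟩
    obtain ⟨ρ, hρ⟩ := exists_extension_of_equiv φ
    exact hno (exists_isUnit_ltpE_mul_eq_one hα hρ hap)

end Stable

/-- Stable case with `α|Z(Δ)` of order `p`: if the equation `μ^{⊏p} = λ⁻¹` has no
solution `μ ∈ Δ^×` (where `λ = α^{-p} σ(a^p)`), then the induced module `V↑G`
(modeled by `W` with `H`-equivariant embedding `ι` and `W = ⊕_{i<p} τ(a)^i ι(V)`) is an
irreducible `FG`-module. -/
theorem stmt12 {F : Type*} [Field F] {G : Type*} [Group G] [Finite G]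
    {V W : Type*} [AddCommGroup V] [Module F V] [AddCommGroup W] [Module F W]
    (H : Subgroup G) (hN : H.Normal) (p : ℕ) (hp : p.Prime) (hidx : H.index = p)
    (σ : Representation F H V) (τ : Representation F G W)
    [Nontrivial V]
    (hirr : ∀ U : Submodule F V, (∀ h : H, ∀ v ∈ U, σ h v ∈ U) → U = ⊥ ∨ U = ⊤)
    (a : G) (ha : a ∉ H) (hap : a ^ p ∈ H)
    (α : V ≃ₗ[F] V)
    (hα : ∀ h : H, σ ⟨a * ↑h * a⁻¹, hN.conj_mem ↑h h.2 a⟩ ∘ₗ (α : V →ₗ[F] V) =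
      (α : V →ₗ[F] V) ∘ₗ σ h)
    -- `α` restricted to the center of `Δ = End_{FH}(V)` has order (exactly) `p`:
    (hmin : ∀ k : ℕ, 0 < k → k < p →
      ∃ z : Module.End F V, (∀ h : H, Commute z (σ h)) ∧
        (∀ δ : Module.End F V, (∀ h : H, Commute δ (σ h)) → Commute z δ) ∧
        (((α.symm : V →ₗ[F] V) ^ k) ∘ₗ z ∘ₗ ((α : V →ₗ[F] V) ^ k)) ≠ z)
    -- the induced-module data:
    (ι : V →ₗ[F] W) (hinj : Function.Injective ι)
    (hequiv : ∀ h : H, τ h ∘ₗ ι = ι ∘ₗ σ h)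
    (hint : DirectSum.IsInternal fun i : Fin p =>
      Submodule.map (τ (a ^ (i : ℕ))) (LinearMap.range ι))
    -- `μ^{⊏p} = λ⁻¹` has no solution `μ ∈ Δ^×`:
    (hno : ¬ ∃ μ : Module.End F V, IsUnit μ ∧ (∀ h : H, Commute μ (σ h)) ∧
      ltpE α μ p * (((α.symm : V →ₗ[F] V) ^ p) ∘ₗ σ ⟨a ^ p, hap⟩) = 1) :
    ∀ U : Submodule F W, (∀ g : G, ∀ w ∈ U, τ g w ∈ U) → U = ⊥ ∨ U = ⊤ := by
  have : σ.IsIrreducible := isIrreducible_iff.2 ⟨‹_›, hirr⟩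
  exact (isIrreducible_iff.1 (stmt12_general hp hidx ha hap hα
    (f := ⟨ι, fun h => (hequiv h).symm⟩)
    (fun k h0 hk => exists_mem_center_endConj_pow_ne hα (hmin k h0 hk)) hinj hint hno)).2
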